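/- For every nonzero a ∈ V, the right-multiplication map x ↦ x ⋆ a is a bijection of V. -/

import Mathlib

open Matrix

/-- The seven matrices `A₁,…,A₇` over `F₂ = ZMod 2` (indexed by `Fin 7`). -/
def A : Fin 7 → Matrix (Fin 7) (Fin 7) (ZMod 2)
  | 0 => 1
  | 1 => !![0,0,1,0,0,0,0; 1,0,1,0,0,0,0; 0,1,0,0,0,0,0; 0,0,0,1,1,1,1;
            0,0,0,1,0,1,0; 0,0,0,0,0,1,1; 0,0,0,0,0,1,0]
  | 2 => !![0,1,0,0,0,0,0; 0,1,1,0,0,0,0; 1,0,1,0,0,0,0; 0,0,0,0,1,0,0;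
            0,0,0,1,1,0,0; 0,0,0,1,1,1,1; 0,0,0,1,0,1,0]
  | 3 => !![0,0,0,1,1,0,0; 0,0,0,1,1,1,0; 0,0,0,0,1,0,1; 1,0,0,0,0,0,1;
            0,0,1,0,0,1,0; 0,1,1,1,0,1,1; 0,0,0,1,1,0,1]
  | 4 => !![0,0,0,0,1,0,0; 0,0,0,0,1,1,1; 0,0,0,1,0,1,0; 0,0,1,0,0,1,1;
            1,0,1,0,0,0,1; 0,0,0,0,1,1,0; 0,1,1,1,0,1,1]
  | 5 => !![0,0,0,1,0,1,1; 0,0,0,1,1,0,0; 0,0,0,0,1,0,0; 0,0,0,1,0,1,0;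
            0,1,1,1,1,1,1; 1,0,1,0,1,1,0; 0,0,1,1,0,1,1]
  | 6 => !![0,0,0,1,1,0,1; 0,0,0,0,1,0,0; 0,0,0,1,0,0,0; 0,1,1,0,1,0,1;
            0,1,1,1,0,1,0; 0,0,1,1,1,0,1; 1,0,0,0,1,1,0]

/-- The multiplication `x ⋆ y = (∑ i, xᵢ Aᵢ) ·ᵥ y` on `V = F₂⁷`. -/
def star (x y : Fin 7 → ZMod 2) : Fin 7 → ZMod 2 := (∑ i, x i • A i) *ᵥ y

/-- The standard basis vectors of `V = F₂⁷`. -/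
def e (i : Fin 7) : Fin 7 → ZMod 2 := Pi.single i 1


/-- The embedding of bits into `ZMod 2`. -/
def bz (b : Bool) : ZMod 2 := if b then 1 else 0

theorem bz_xor (b c : Bool) : bz (b ^^ c) = bz b + bz c := by revert b c; decide

theorem bz_and (b c : Bool) : bz (b && c) = bz b * bz c := by revert b c; decide

theorem bz_surj (z : ZMod 2) : ∃ b, bz b = z := by revert z; decide

theorem bz_zero (b : Bool) (h : bz b = 0) : b = false := by revert b; decide

/-- Coordinates of the product, on bits. -/
def bstar (x a : Fin 7 → Bool) : Fin 7 → Bool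
  | 0 => (x 0 && (a 0)) ^^ (x 1 && (a 2)) ^^ (x 2 && (a 1)) ^^ (x 3 && (a 3 ^^ a 4)) ^^ (x 4 && (a 4)) ^^ (x 5 && (a 3 ^^ a 5 ^^ a 6)) ^^ (x 6 && (a 3 ^^ a 4 ^^ a 6))
  | 1 => (x 0 && (a 1)) ^^ (x 1 && (a 0 ^^ a 2)) ^^ (x 2 && (a 1 ^^ a 2)) ^^ (x 3 && (a 3 ^^ a 4 ^^ a 5)) ^^ (x 4 && (a 4 ^^ a 5 ^^ a 6)) ^^ (x 5 && (a 3 ^^ a 4)) ^^ (x 6 && (a 4))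
  | 2 => (x 0 && (a 2)) ^^ (x 1 && (a 1)) ^^ (x 2 && (a 0 ^^ a 2)) ^^ (x 3 && (a 4 ^^ a 6)) ^^ (x 4 && (a 3 ^^ a 5)) ^^ (x 5 && (a 4)) ^^ (x 6 && (a 3))
  | 3 => (x 0 && (a 3)) ^^ (x 1 && (a 3 ^^ a 4 ^^ a 5 ^^ a 6)) ^^ (x 2 && (a 4)) ^^ (x 3 && (a 0 ^^ a 6)) ^^ (x 4 && (a 2 ^^ a 5 ^^ a 6)) ^^ (x 5 && (a 3 ^^ a 5)) ^^ (x 6 && (a 1 ^^ a 2 ^^ a 4 ^^ a 6))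
  | 4 => (x 0 && (a 4)) ^^ (x 1 && (a 3 ^^ a 5)) ^^ (x 2 && (a 3 ^^ a 4)) ^^ (x 3 && (a 2 ^^ a 5)) ^^ (x 4 && (a 0 ^^ a 2 ^^ a 6)) ^^ (x 5 && (a 1 ^^ a 2 ^^ a 3 ^^ a 4 ^^ a 5 ^^ a 6)) ^^ (x 6 && (a 1 ^^ a 2 ^^ a 3 ^^ a 5))
  | 5 => (x 0 && (a 5)) ^^ (x 1 && (a 5 ^^ a 6)) ^^ (x 2 && (a 3 ^^ a 4 ^^ a 5 ^^ a 6)) ^^ (x 3 && (a 1 ^^ a 2 ^^ a 3 ^^ a 5 ^^ a 6)) ^^ (x 4 && (a 4 ^^ a 5)) ^^ (x 5 && (a 0 ^^ a 2 ^^ a 4 ^^ a 5)) ^^ (x 6 && (a 2 ^^ a 3 ^^ a 4 ^^ a 6))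
  | 6 => (x 0 && (a 6)) ^^ (x 1 && (a 5)) ^^ (x 2 && (a 3 ^^ a 5)) ^^ (x 3 && (a 3 ^^ a 4 ^^ a 6)) ^^ (x 4 && (a 1 ^^ a 2 ^^ a 3 ^^ a 5 ^^ a 6)) ^^ (x 5 && (a 2 ^^ a 3 ^^ a 5 ^^ a 6)) ^^ (x 6 && (a 0 ^^ a 4 ^^ a 5))

theorem star_bz (x a : Fin 7 → Bool) (k : Fin 7) :
    star (fun i => bz (x i)) (fun i => bz (a i)) k = bz (bstar x a k) := by
  fin_cases k <;>
    simp [_root_.star, A, bstar, Matrix.mulVec, dotProduct, Fin.sum_univ_succ, bz_xor, bz_and,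
      Matrix.add_apply, Matrix.smul_apply, Matrix.one_apply] <;> ring

/-- Both values of a bit. -/
def allB (f : Bool → Bool) : Bool := f false && f true

theorem allB_spec {f : Bool → Bool} (h : allB f = true) (b : Bool) : f b = true := by
  unfold allB at h
  cases b <;> simp_all

/-- All bit vectors of length 7. -/
def allV (f : (Fin 7 → Bool) → Bool) : Bool :=
  allB fun a => allB fun b => allB fun c => allB fun d => allB fun e => allB fun g => allB fun h =>
    f ![a, b, c, d, e, g, h]

theorem allV_spec {f : (Fin 7 → Bool) → Bool} (h : allV f = true) (v : Fin 7 → Bool) :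
    f v = true := by
  have := allB_spec (allB_spec (allB_spec (allB_spec (allB_spec (allB_spec (allB_spec h
    (v 0)) (v 1)) (v 2)) (v 3)) (v 4)) (v 5)) (v 6)
  convert this using 2
  ext i
  fin_cases i <;> rfl

/-- Some coordinate is set. -/
def nz (v : Fin 7 → Bool) : Bool := v 0 || v 1 || v 2 || v 3 || v 4 || v 5 || v 6

theorem bcheck : (allV fun a => !nz a || allV fun x => !nz x || nz (bstar x a)) = true := by
  decide +kernel

theorem nz_of_ne (v : Fin 7 → Bool) (h : (fun i => bz (v i)) ≠ 0) : nz v = true := by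
  by_contra hn
  apply h
  simp [nz] at hn
  ext i
  fin_cases i <;> simp [hn, bz]

theorem star_ne (x a : Fin 7 → ZMod 2) (hx : x ≠ 0) (ha : a ≠ 0) : star x a ≠ 0 := by
  choose g hg using bz_surj
  obtain ⟨xb, rfl⟩ : ∃ y : Fin 7 → Bool, (fun i => bz (y i)) = x :=
    ⟨fun i => g (x i), funext fun i => hg _⟩
  obtain ⟨ab, rfl⟩ : ∃ y : Fin 7 → Bool, (fun i => bz (y i)) = a :=
    ⟨fun i => g (a i), funext fun i => hg _⟩
  intro h0
  have hz : ∀ k, bstar xb ab k = false := fun k =>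
    bz_zero _ (by rw [← star_bz, h0]; rfl)
  have h1 := allV_spec bcheck ab
  simp only [nz_of_ne ab ha, Bool.not_true, Bool.false_or] at h1
  have h2 := allV_spec h1 xb
  simp only [nz_of_ne xb hx, Bool.not_true, Bool.false_or] at h2
  simp [nz, hz] at h2

theorem stmt_4 :
    ∀ a : Fin 7 → ZMod 2, a ≠ 0 → Function.Bijective (fun x => star x a) := by
  intro a ha
  apply Function.Injective.bijective_of_finite
  intro x y hxy
  by_contra hne
  refine star_ne (x - y) a (sub_ne_zero.mpr hne) ha ?_
  have : star (x - y) a = star x a - star y a := by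
    simp [_root_.star, sub_smul, Finset.sum_sub_distrib, Matrix.sub_mulVec]
  rw [this]
  exact sub_eq_zero.mpr hxy
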